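/- Let 0 < s < 1 and 0 < ε < (1−s)/(2s). There exists a constant C > 0, depending only on s and ε, such that for all δ > 0, T > 0, η ∈ ℝ³, t ∈ [0, T], and all ξ, ξ★ ∈ ℝ³ with ⟨ξ★⟩ ≥ √2 |ξ|: ⟨ξ⟩ M(t, ξ) ≤ C ⟨ξ★⟩ M(t, ξ − ξ★). -/

import Mathlib

open MeasureTheory

/-- The symbol `M(t,ξ) = (1 + δ ∫₀^{T−t} ⟨ξ − τη⟩^{2s} dτ)^{−1/2−ε}`. -/
noncomputable def symbM (s ε δ T : ℝ) (η : EuclideanSpace ℝ (Fin 3)) (t : ℝ)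
    (ξ : EuclideanSpace ℝ (Fin 3)) : ℝ :=
  (1 + δ * ∫ τ in (0 : ℝ)..(T - t), Real.sqrt (1 + ‖ξ - τ • η‖ ^ 2) ^ (2 * s)) ^
    (-(1 / 2 : ℝ) - ε)

/-!
For `p ≥ 0` the integral `∫₀ᴸ ⟨ξ - τη⟩ᵖ dτ` is comparable to `L (⟨ξ⟩ + L‖η‖)ᵖ`, uniformly in all
parameters: the upper bound is pointwise, and for the lower bound, of any two points `ξ - τη` and
`ξ - (τ + L/2)η` of the path one has a bracket of the order of `⟨ξ⟩ + L‖η‖`. Hence `⟨y⟩ ≤ R ⟨x⟩`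
with `R ≥ 1` makes the integral at `y` at most `2 (7R)ᵖ` times the one at `x`. Raising this to the
power `1/2 + ε`, with `p = 2s`, costs only a factor of order `R`, because `2s (1/2 + ε) ≤ 1`. For
`x = ξ` and `y = ξ - ξ★` one can take `R = (⟨ξ⟩ + ⟨ξ★⟩) / ⟨ξ⟩`.
-/

open Real

section RealInequalities

variable {a b c u v p : ℝ}

theorem rpow_le_rpow_add_rpow_of_le_max (ha : 0 ≤ a) (hu : 0 ≤ u) (hv : 0 ≤ v) (hp : 0 ≤ p)
    (h : a ≤ max u v) : a ^ p ≤ u ^ p + v ^ p := by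
  rcases le_max_iff.mp h with hau | hav
  · exact (rpow_le_rpow ha hau hp).trans (le_add_of_nonneg_right (rpow_nonneg hv p))
  · exact (rpow_le_rpow ha hav hp).trans (le_add_of_nonneg_left (rpow_nonneg hu p))

theorem rpow_neg_le_rpow_mul_rpow_neg (ha : 0 ≤ a) (hb : 0 < b) (hc : 0 < c) (hp : 0 ≤ p)
    (h : b ≤ c * a) : a ^ (-p) ≤ c ^ p * b ^ (-p) :=
  calc a ^ (-p) = c ^ p * (c * a) ^ (-p) := by
        rw [mul_rpow hc.le ha, ← mul_assoc, ← rpow_add hc, add_neg_cancel, rpow_zero, one_mul]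
    _ ≤ c ^ p * b ^ (-p) :=
        mul_le_mul_of_nonneg_left (rpow_le_rpow_of_nonpos hb h (neg_nonpos.mpr hp))
          (rpow_nonneg hc.le p)

end RealInequalities

theorem intervalIntegral_eq_integral_add_comp_add_right {F : Type*} [NormedAddCommGroup F]
    [NormedSpace ℝ F] {f : ℝ → F} {a h : ℝ} (hf : IntervalIntegrable f volume a (a + h))
    (hf' : IntervalIntegrable f volume (a + h) (a + h + h)) :
    ∫ τ in a..(a + h + h), f τ = ∫ τ in a..(a + h), (f τ + f (τ + h)) := by
  have hshift : IntervalIntegrable (fun τ ↦ f (τ + h)) volume a (a + h) := by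
    simpa only [add_sub_cancel_right] using hf'.comp_add_right h
  rw [intervalIntegral.integral_add hf hshift, intervalIntegral.integral_comp_add_right,
    intervalIntegral.integral_add_adjacent_intervals hf hf']

section Bracket

variable {E : Type*} [SeminormedAddCommGroup E]

/-- The Japanese bracket `⟨x⟩ = (1 + ‖x‖²)^{1/2}`, written `⟪x⟫` below since `⟨x⟩` is the anonymous
constructor. -/
noncomputable def japaneseBracket (x : E) : ℝ := √(1 + ‖x‖ ^ 2)

local notation "⟪" x "⟫" => japaneseBracket x

theorem one_le_japaneseBracket (x : E) : 1 ≤ ⟪x⟫ :=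
  one_le_sqrt.mpr (le_add_of_nonneg_right (sq_nonneg ‖x‖))

theorem japaneseBracket_pos (x : E) : 0 < ⟪x⟫ :=
  one_pos.trans_le (one_le_japaneseBracket x)

theorem norm_le_japaneseBracket (x : E) : ‖x‖ ≤ ⟪x⟫ :=
  le_sqrt_of_sq_le (le_add_of_nonneg_left zero_le_one)

theorem japaneseBracket_le_add_norm_sub (x y : E) : ⟪x⟫ ≤ ⟪y⟫ + ‖x - y‖ := by
  have hxy : ‖x‖ ≤ ‖y‖ + ‖x - y‖ := norm_le_norm_add_norm_sub' x y
  refine sqrt_le_iff.mpr ⟨add_nonneg (japaneseBracket_pos y).le (norm_nonneg _), ?_⟩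
  calc 1 + ‖x‖ ^ 2 ≤ 1 + (‖y‖ + ‖x - y‖) ^ 2 := by gcongr
    _ = (1 + ‖y‖ ^ 2) + 2 * (‖y‖ * ‖x - y‖) + ‖x - y‖ ^ 2 := by ring
    _ ≤ ⟪y⟫ ^ 2 + 2 * (⟪y⟫ * ‖x - y‖) + ‖x - y‖ ^ 2 := by
        rw [japaneseBracket, sq_sqrt (by positivity)]
        gcongr
        exact norm_le_japaneseBracket y
    _ = (⟪y⟫ + ‖x - y‖) ^ 2 := by ring

theorem japaneseBracket_sub_le (x y : E) : ⟪x - y⟫ ≤ ⟪x⟫ + ⟪y⟫ := by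
  have h := japaneseBracket_le_add_norm_sub (x - y) x
  rw [sub_sub_cancel_left, norm_neg] at h
  exact h.trans (by gcongr; exact norm_le_japaneseBracket y)

theorem japaneseBracket_le_one_add_norm (x : E) : ⟪x⟫ ≤ 1 + ‖x‖ := by
  simpa [japaneseBracket] using japaneseBracket_le_add_norm_sub x 0

theorem japaneseBracket_le_of_mul_norm_le {κ b : ℝ} (hκ : 0 < κ) (hb : 1 ≤ b) {x : E}
    (h : κ * ‖x‖ ≤ b) : ⟪x⟫ ≤ (1 + κ⁻¹) * b :=
  calc ⟪x⟫ ≤ 1 + ‖x‖ := japaneseBracket_le_one_add_norm x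
    _ ≤ b + κ⁻¹ * b := add_le_add hb ((le_inv_mul_iff₀ hκ).mpr h)
    _ = (1 + κ⁻¹) * b := by ring

variable [NormedSpace ℝ E] {p L τ : ℝ}

theorem japaneseBracket_sub_smul_le (hτ : τ ∈ Set.Icc 0 L) (x η : E) :
    ⟪x - τ • η⟫ ≤ ⟪x⟫ + L * ‖η‖ := by
  have h := japaneseBracket_le_add_norm_sub (x - τ • η) x
  rw [sub_sub_cancel_left, norm_neg, norm_smul, norm_of_nonneg hτ.1] at h
  exact h.trans (by gcongr; exact hτ.2)

theorem japaneseBracket_add_le_seven_mul_max (hτ : τ ∈ Set.Icc 0 (L / 2)) (x η : E) :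
    ⟪x⟫ + L * ‖η‖ ≤ 7 * max ⟪x - τ • η⟫ ⟪x - (τ + L / 2) • η⟫ := by
  set u := ⟪x - τ • η⟫
  set v := ⟪x - (τ + L / 2) • η⟫
  have hL : 0 ≤ L / 2 := hτ.1.trans hτ.2
  have hgap : L / 2 * ‖η‖ ≤ u + v :=
    calc L / 2 * ‖η‖ = ‖(x - τ • η) - (x - (τ + L / 2) • η)‖ := by
          rw [sub_sub_sub_cancel_left, ← sub_smul, add_sub_cancel_left, norm_smul,
            norm_of_nonneg hL]
      _ ≤ u + v := (norm_sub_le _ _).trans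
          (add_le_add (norm_le_japaneseBracket _) (norm_le_japaneseBracket _))
  have hx : ⟪x⟫ ≤ u + L / 2 * ‖η‖ :=
    calc ⟪x⟫ ≤ u + ‖x - (x - τ • η)‖ := japaneseBracket_le_add_norm_sub _ _
      _ = u + τ * ‖η‖ := by rw [sub_sub_cancel, norm_smul, norm_of_nonneg hτ.1]
      _ ≤ u + L / 2 * ‖η‖ := by gcongr; exact hτ.2
  calc ⟪x⟫ + L * ‖η‖ ≤ 4 * u + 3 * v := by linarith
    _ ≤ 4 * max u v + 3 * max u v := by gcongr; exacts [le_max_left u v, le_max_right u v]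
    _ = 7 * max u v := by ring

/-- The integral of `⟨·⟩ᵖ` along the path `τ ↦ x - τη`, `0 ≤ τ ≤ L`. In the symbol `M(t,ξ)` it
occurs with `p = 2s`, `L = T - t` and `x = ξ`. -/
noncomputable def bracketIntegral (p L : ℝ) (η x : E) : ℝ :=
  ∫ τ in (0 : ℝ)..L, ⟪x - τ • η⟫ ^ p

theorem continuous_japaneseBracket_sub_smul_rpow (p : ℝ) (η x : E) :
    Continuous fun τ : ℝ ↦ ⟪x - τ • η⟫ ^ p := by
  refine Continuous.rpow_const ?_ fun τ ↦ .inl (japaneseBracket_pos _).ne'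
  unfold japaneseBracket
  fun_prop

theorem bracketIntegral_nonneg (hL : 0 ≤ L) (η x : E) : 0 ≤ bracketIntegral p L η x :=
  intervalIntegral.integral_nonneg hL fun _ _ ↦ rpow_nonneg (japaneseBracket_pos _).le p

theorem bracketIntegral_le (hp : 0 ≤ p) (hL : 0 ≤ L) (η x : E) :
    bracketIntegral p L η x ≤ L * (⟪x⟫ + L * ‖η‖) ^ p :=
  calc bracketIntegral p L η x ≤ ∫ _ in (0 : ℝ)..L, (⟪x⟫ + L * ‖η‖) ^ p :=
        intervalIntegral.integral_mono_on hL
          ((continuous_japaneseBracket_sub_smul_rpow p η x).intervalIntegrable 0 L)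
          intervalIntegrable_const fun _ hτ ↦
            rpow_le_rpow (japaneseBracket_pos _).le (japaneseBracket_sub_smul_le hτ x η) hp
    _ = L * (⟪x⟫ + L * ‖η‖) ^ p := by
        rw [intervalIntegral.integral_const, sub_zero, smul_eq_mul]

theorem bracketIntegral_eq_integral_half (p L : ℝ) (η x : E) :
    bracketIntegral p L η x =
      ∫ τ in (0 : ℝ)..(L / 2), (⟪x - τ • η⟫ ^ p + ⟪x - (τ + L / 2) • η⟫ ^ p) := by
  have hint := (continuous_japaneseBracket_sub_smul_rpow p η x).intervalIntegrable (μ := volume)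
  simpa only [bracketIntegral, zero_add, add_halves] using
    intervalIntegral_eq_integral_add_comp_add_right (hint 0 (0 + L / 2)) (hint _ _)

theorem le_bracketIntegral (hp : 0 ≤ p) (hL : 0 ≤ L) (η x : E) :
    L / 2 * ((⟪x⟫ + L * ‖η‖) / 7) ^ p ≤ bracketIntegral p L η x := by
  have hcont := continuous_japaneseBracket_sub_smul_rpow p η x
  have hbase : 0 ≤ (⟪x⟫ + L * ‖η‖) / 7 := by
    have := japaneseBracket_pos x
    positivity
  calc L / 2 * ((⟪x⟫ + L * ‖η‖) / 7) ^ p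
      = ∫ _ in (0 : ℝ)..(L / 2), ((⟪x⟫ + L * ‖η‖) / 7) ^ p := by
        rw [intervalIntegral.integral_const, sub_zero, smul_eq_mul]
    _ ≤ ∫ τ in (0 : ℝ)..(L / 2), (⟪x - τ • η⟫ ^ p + ⟪x - (τ + L / 2) • η⟫ ^ p) :=
        intervalIntegral.integral_mono_on (div_nonneg hL zero_le_two) intervalIntegrable_const
          ((hcont.add (hcont.comp (continuous_add_const (L / 2)))).intervalIntegrable 0 (L / 2))
          fun _ hτ ↦ rpow_le_rpow_add_rpow_of_le_max hbase (japaneseBracket_pos _).le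
            (japaneseBracket_pos _).le hp
            ((div_le_iff₀' (by norm_num)).mpr (japaneseBracket_add_le_seven_mul_max hτ x η))
    _ = bracketIntegral p L η x := (bracketIntegral_eq_integral_half p L η x).symm

theorem bracketIntegral_le_mul_of_japaneseBracket_le (hp : 0 ≤ p) (hL : 0 ≤ L) {R : ℝ}
    (hR : 1 ≤ R) (η : E) {x y : E} (hxy : ⟪y⟫ ≤ R * ⟪x⟫) :
    bracketIntegral p L η y ≤ 2 * (7 * R) ^ p * bracketIntegral p L η x := by
  have hx := japaneseBracket_pos x
  have hy := japaneseBracket_pos y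
  have hbase : ⟪y⟫ + L * ‖η‖ ≤ 7 * R * ((⟪x⟫ + L * ‖η‖) / 7) := by
    linarith [le_mul_of_one_le_left (mul_nonneg hL (norm_nonneg η)) hR]
  calc bracketIntegral p L η y ≤ L * (⟪y⟫ + L * ‖η‖) ^ p := bracketIntegral_le hp hL η y
    _ ≤ L * (7 * R * ((⟪x⟫ + L * ‖η‖) / 7)) ^ p := by gcongr
    _ = 2 * (7 * R) ^ p * (L / 2 * ((⟪x⟫ + L * ‖η‖) / 7) ^ p) := by
        rw [mul_rpow (by positivity) (by positivity)]
        ring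
    _ ≤ 2 * (7 * R) ^ p * bracketIntegral p L η x := by
        gcongr
        exact le_bracketIntegral hp hL η x

/-- The symbol `M(t,ξ)` of `symbM`, with frequencies in an arbitrary real seminormed space. -/
noncomputable def bracketSymbol (s ε δ T : ℝ) (η : E) (t : ℝ) (ξ : E) : ℝ :=
  (1 + δ * bracketIntegral (2 * s) (T - t) η ξ) ^ (-(1 / 2 : ℝ) - ε)

variable {s ε δ T t : ℝ}

theorem bracketSymbol_nonneg (hδ : 0 ≤ δ) (ht : t ≤ T) (η ξ : E) :
    0 ≤ bracketSymbol s ε δ T η t ξ :=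
  rpow_nonneg (add_nonneg zero_le_one
    (mul_nonneg hδ (bracketIntegral_nonneg (sub_nonneg.mpr ht) η ξ))) _

theorem bracketSymbol_le_mul_of_japaneseBracket_le (hs : 0 ≤ s) (hε : -(1 / 2) ≤ ε)
    (hsε : 2 * s * (1 / 2 + ε) ≤ 1) (hδ : 0 ≤ δ) (ht : t ≤ T) {R : ℝ} (hR : 1 ≤ R) (η : E)
    {x y : E} (hxy : ⟪y⟫ ≤ R * ⟪x⟫) :
    bracketSymbol s ε δ T η t x ≤ 2 ^ (1 / 2 + ε) * (7 * R) * bracketSymbol s ε δ T η t y := by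
  set I := bracketIntegral (2 * s) (T - t) η x with hI
  set J := bracketIntegral (2 * s) (T - t) η y with hJ
  set A := 2 * (7 * R) ^ (2 * s)
  have hp : 0 ≤ 2 * s := by positivity
  have hσ : 0 ≤ 1 / 2 + ε := by linarith
  have hR7 : 1 ≤ 7 * R := by linarith
  have hI0 : 0 ≤ I := bracketIntegral_nonneg (sub_nonneg.mpr ht) η x
  have hJ0 : 0 ≤ J := bracketIntegral_nonneg (sub_nonneg.mpr ht) η y
  have hA : 1 ≤ A := by linarith [one_le_rpow hR7 hp]
  have hbase : 1 + δ * J ≤ A * (1 + δ * I) :=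
    calc 1 + δ * J ≤ A + δ * (A * I) := by
          gcongr
          exact bracketIntegral_le_mul_of_japaneseBracket_le hp (sub_nonneg.mpr ht) hR η hxy
      _ = A * (1 + δ * I) := by ring
  have hpow : A ^ (1 / 2 + ε) ≤ 2 ^ (1 / 2 + ε) * (7 * R) := by
    rw [mul_rpow zero_le_two (by positivity), ← rpow_mul (by positivity)]
    gcongr
    exact rpow_le_self_of_one_le hR7 hsε
  rw [bracketSymbol, bracketSymbol, ← hI, ← hJ, ← neg_add']
  calc (1 + δ * I) ^ (-(1 / 2 + ε)) ≤ A ^ (1 / 2 + ε) * (1 + δ * J) ^ (-(1 / 2 + ε)) :=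
        rpow_neg_le_rpow_mul_rpow_neg (by positivity) (by positivity) (by positivity) hσ hbase
    _ ≤ 2 ^ (1 / 2 + ε) * (7 * R) * (1 + δ * J) ^ (-(1 / 2 + ε)) := by gcongr

theorem japaneseBracket_mul_bracketSymbol_le (hs : 0 ≤ s) (hε : -(1 / 2) ≤ ε)
    (hsε : 2 * s * (1 / 2 + ε) ≤ 1) (hδ : 0 ≤ δ) (ht : t ≤ T) (η ξ ζ : E) :
    ⟪ξ⟫ * bracketSymbol s ε δ T η t ξ ≤
      7 * 2 ^ (1 / 2 + ε) * (⟪ξ⟫ + ⟪ζ⟫) * bracketSymbol s ε δ T η t (ξ - ζ) := by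
  have hξ := japaneseBracket_pos ξ
  have hR : 1 ≤ (⟪ξ⟫ + ⟪ζ⟫) / ⟪ξ⟫ :=
    (one_le_div hξ).mpr (le_add_of_nonneg_right (japaneseBracket_pos ζ).le)
  have hsub : ⟪ξ - ζ⟫ ≤ (⟪ξ⟫ + ⟪ζ⟫) / ⟪ξ⟫ * ⟪ξ⟫ := by
    rw [div_mul_cancel₀ _ hξ.ne']
    exact japaneseBracket_sub_le ξ ζ
  calc ⟪ξ⟫ * bracketSymbol s ε δ T η t ξ
      ≤ ⟪ξ⟫ * (2 ^ (1 / 2 + ε) * (7 * ((⟪ξ⟫ + ⟪ζ⟫) / ⟪ξ⟫)) *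
          bracketSymbol s ε δ T η t (ξ - ζ)) := by
        gcongr
        exact bracketSymbol_le_mul_of_japaneseBracket_le hs hε hsε hδ ht hR η hsub
    _ = 7 * 2 ^ (1 / 2 + ε) * (⟪ξ⟫ + ⟪ζ⟫) * bracketSymbol s ε δ T η t (ξ - ζ) := by
        field_simp

theorem stmt18_general (E : Type*) [SeminormedAddCommGroup E] [NormedSpace ℝ E] {s ε κ : ℝ}
    (hs : 0 ≤ s) (hε : -(1 / 2) ≤ ε) (hsε : 2 * s * (1 / 2 + ε) ≤ 1) (hκ : 0 < κ) :
    ∃ C : ℝ, 0 < C ∧ ∀ δ T : ℝ, 0 ≤ δ → ∀ η : E, ∀ t ≤ T, ∀ ξ ξs : E, κ * ‖ξ‖ ≤ ⟪ξs⟫ →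
      ⟪ξ⟫ * bracketSymbol s ε δ T η t ξ ≤ C * ⟪ξs⟫ * bracketSymbol s ε δ T η t (ξ - ξs) := by
  refine ⟨7 * 2 ^ (1 / 2 + ε) * (2 + κ⁻¹), by positivity, fun δ T hδ η t ht ξ ξs h ↦ ?_⟩
  have hsum : ⟪ξ⟫ + ⟪ξs⟫ ≤ (2 + κ⁻¹) * ⟪ξs⟫ := by
    linarith [japaneseBracket_le_of_mul_norm_le hκ (one_le_japaneseBracket ξs) h]
  refine (japaneseBracket_mul_bracketSymbol_le hs hε hsε hδ ht η ξ ξs).trans ?_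
  rw [mul_assoc (7 * 2 ^ (1 / 2 + ε)) (2 + κ⁻¹)]
  gcongr
  exact bracketSymbol_nonneg hδ ht η (ξ - ξs)

end Bracket

theorem stmt18 (s ε : ℝ) (hs : s ∈ Set.Ioo (0 : ℝ) 1)
    (hε : ε ∈ Set.Ioo (0 : ℝ) ((1 - s) / (2 * s))) :
    ∃ C : ℝ, 0 < C ∧ ∀ δ T : ℝ, 0 < δ → 0 < T → ∀ η : EuclideanSpace ℝ (Fin 3),
      ∀ t ∈ Set.Icc (0 : ℝ) T, ∀ ξ ξs : EuclideanSpace ℝ (Fin 3),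
        Real.sqrt 2 * ‖ξ‖ ≤ Real.sqrt (1 + ‖ξs‖ ^ 2) →
        Real.sqrt (1 + ‖ξ‖ ^ 2) * symbM s ε δ T η t ξ
          ≤ C * Real.sqrt (1 + ‖ξs‖ ^ 2) * symbM s ε δ T η t (ξ - ξs) := by
  have hsε : ε * (2 * s) < 1 - s := (lt_div_iff₀ (mul_pos two_pos hs.1)).mp hε.2
  obtain ⟨C, hC, hbound⟩ := stmt18_general (EuclideanSpace ℝ (Fin 3)) (s := s) (ε := ε) hs.1.le
    (by linarith [hε.1]) (by linarith) (sqrt_pos.mpr two_pos)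
  exact ⟨C, hC, fun δ T hδ _ η t ht ↦ hbound δ T hδ.le η t ht.2⟩
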